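/- Let G₂(q) = −1/24 + Σ_{n≥1} σ₁(n) q^n, ϑ(q) = Σ_{n∈ℤ} q^{n²}, and α(q) = Σ_{odd n > 0} σ₁(n) q^n. Then ϑ(q)⁴ = 1 + 8Σ_{n≥1} (Σ_{d|n, 4∤d} d) q^n (Jacobi's four-square theorem), and consequently ϑ(q)⁴ + 4α(q) + 24G₂(q⁴) has constant term 0 and its coefficient of q¹ equals 8 + 4·1 = 12. -/

import Mathlib

/-- `r₄(n)`: the number of representations of `n` as a sum of four squares. -/
noncomputable def r4 (n : ℕ) : ℕ :=
  Nat.card {v : Fin 4 → ℤ // ∑ i, (v i) ^ 2 = (n : ℤ)}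

/-- The `q^n`-coefficient of `ϑ(q)⁴ + 4α(q) + 24G₂(q⁴)`, where
`ϑ(q) = Σ_{m∈ℤ} q^{m²}`, `α(q) = Σ_{odd m>0} σ₁(m) q^m`, and
`G₂(q) = −1/24 + Σ_{m≥1} σ₁(m) q^m`. -/
noncomputable def comboCoeff (n : ℕ) : ℚ :=
  (r4 n : ℚ) + 4 * (if Odd n then ((∑ d ∈ n.divisors, d : ℕ) : ℚ) else 0) +
    24 * (if n = 0 then -1 / 24
      else if 4 ∣ n then ((∑ d ∈ (n / 4).divisors, d : ℕ) : ℚ) else 0)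

namespace J4
open Finset

/-- triples `(x,a,b)` with `x² + 4ab = N`, `a,b > 0` -/
noncomputable def S (N : ℤ) : Finset (ℤ × ℤ × ℤ) :=
  ((Icc (-N) N) ×ˢ (Icc 1 N) ×ˢ (Icc 1 N)).filter (fun p => p.1 ^ 2 + 4 * (p.2.1 * p.2.2) = N)

lemma mem_S (N : ℤ) (p : ℤ × ℤ × ℤ) :
    p ∈ S N ↔ 0 < p.2.1 ∧ 0 < p.2.2 ∧ p.1 ^ 2 + 4 * (p.2.1 * p.2.2) = N := by
  obtain ⟨x, a, b⟩ := p
  simp only [S, mem_filter, mem_product, mem_Icc]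
  constructor
  · rintro ⟨⟨-, ⟨h1, -⟩, h2, -⟩, h⟩
    exact ⟨by omega, by omega, h⟩
  · rintro ⟨ha, hb, h⟩
    have hab : 0 < a * b := mul_pos ha hb
    refine ⟨⟨⟨?_, ?_⟩, ⟨by omega, ?_⟩, by omega, ?_⟩, h⟩ <;> nlinarith [sq_nonneg (x-1), sq_nonneg (x+1), sq_nonneg x]

lemma not_sq (N y : ℤ) (hN : N % 8 = 5) : y ^ 2 ≠ N := by
  intro h
  have h8 : (y % 8 = 0 ∨ y % 8 = 1 ∨ y % 8 = 2 ∨ y % 8 = 3 ∨ y % 8 = 4 ∨ y % 8 = 5 ∨ y % 8 = 6 ∨ y % 8 = 7) := by omega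
  have : y ^ 2 % 8 = 5 := by rw [h, hN]
  rcases h8 with h8 | h8 | h8 | h8 | h8 | h8 | h8 | h8 <;> simp [pow_two, Int.mul_emod, h8] at this

def hh (p : ℤ × ℤ × ℤ) : ℤ := (p.2.1 + p.2.2) * (p.2.1 - p.1) * (p.2.2 + p.1)

lemma sum_hh (N : ℤ) (hN : N % 8 = 5) : ∑ p ∈ S N, hh p = 0 := by
  have hV : ∑ p ∈ (S N).filter (fun p => 0 < p.2.2 + p.1 - p.2.1), hh p
      = ∑ p ∈ (S N).filter (fun p => 0 < p.2.2 + p.1 - p.2.1), - hh p := by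
    refine Finset.sum_nbij' (fun p => (2 * p.2.1 - p.1, p.2.1, p.2.2 + p.1 - p.2.1))
      (fun p => (2 * p.2.1 - p.1, p.2.1, p.2.2 + p.1 - p.2.1)) ?_ ?_ ?_ ?_ ?_
    · rintro ⟨x, a, b⟩ h
      simp only [mem_filter, mem_S] at h ⊢
      obtain ⟨⟨ha, hb, h⟩, hv⟩ := h
      exact ⟨⟨ha, hv, by rw [← h]; ring⟩, by linarith⟩
    · rintro ⟨x, a, b⟩ h
      simp only [mem_filter, mem_S] at h ⊢
      obtain ⟨⟨ha, hb, h⟩, hv⟩ := h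
      exact ⟨⟨ha, hv, by rw [← h]; ring⟩, by linarith⟩
    · rintro ⟨x, a, b⟩ _; ext <;> simp <;> ring
    · rintro ⟨x, a, b⟩ _; ext <;> simp <;> ring
    · rintro ⟨x, a, b⟩ _; simp only [hh]; ring
  have hW : ∑ p ∈ (S N).filter (fun p => ¬ 0 < p.2.2 + p.1 - p.2.1), hh p
      = ∑ p ∈ (S N).filter (fun p => 0 < p.2.2 + p.1 - p.2.1), hh p := by
    refine Finset.sum_nbij' (fun p => (-p.1, p.2.2, p.2.1)) (fun p => (-p.1, p.2.2, p.2.1)) ?_ ?_ ?_ ?_ ?_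
    · rintro ⟨x, a, b⟩ h
      simp only [mem_filter, mem_S] at h ⊢
      obtain ⟨⟨ha, hb, h⟩, hv⟩ := h
      refine ⟨⟨hb, ha, by rw [← h]; ring⟩, ?_⟩
      have : b + x - a ≠ 0 := by
        intro h0
        apply not_sq N (2 * a - x) hN
        obtain rfl : b = a - x := by linarith
        rw [← h]; ring
      omega
    · rintro ⟨x, a, b⟩ h
      simp only [mem_filter, mem_S] at h ⊢
      obtain ⟨⟨ha, hb, h⟩, hv⟩ := h
      exact ⟨⟨hb, ha, by rw [← h]; ring⟩, by linarith⟩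
    · rintro ⟨x, a, b⟩ _; ext <;> simp
    · rintro ⟨x, a, b⟩ _; ext <;> simp
    · rintro ⟨x, a, b⟩ _; simp only [hh]; ring
  rw [← Finset.sum_filter_add_sum_filter_not (S N) (fun p => 0 < p.2.2 + p.1 - p.2.1), hW]
  rw [Finset.sum_neg_distrib] at hV
  linarith

lemma sum_S (N : ℤ) (hN : N % 8 = 5) : ∑ p ∈ S N, (N - 5 * p.1 ^ 2) * p.2.1 = 0 := by
  have h1 : ∑ p ∈ S N, hh p = ∑ p ∈ S N, hh (-p.1, p.2) := by
    refine Finset.sum_nbij' (fun p => (-p.1, p.2)) (fun p => (-p.1, p.2)) ?_ ?_ ?_ ?_ ?_ <;>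
    simp [mem_S]
  have h2 : ∑ p ∈ S N, (N - 5 * p.1 ^ 2) * p.2.1 = ∑ p ∈ S N, (N - 5 * p.1 ^ 2) * p.2.2 := by
    refine Finset.sum_nbij' (fun p => (p.1, p.2.2, p.2.1)) (fun p => (p.1, p.2.2, p.2.1)) ?_ ?_ ?_ ?_ ?_ <;>
    simp +contextual [mem_S, mul_comm]
  have h3 : ∑ p ∈ S N, (N - 5 * p.1 ^ 2) * p.2.1 + ∑ p ∈ S N, (N - 5 * p.1 ^ 2) * p.2.2
      = 2 * (∑ p ∈ S N, hh p + ∑ p ∈ S N, hh (-p.1, p.2)) := by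
    rw [← Finset.sum_add_distrib, ← Finset.sum_add_distrib, Finset.mul_sum]
    refine Finset.sum_congr rfl ?_
    rintro ⟨x, a, b⟩ h
    rw [mem_S] at h
    obtain ⟨-, -, h⟩ := h
    simp only [hh] at h ⊢
    rw [← h]; ring
  rw [← h1, sum_hh N hN, ← h2] at h3
  linarith

/-- sigma of integer, truncated at B -/
lemma sum_box (B : ℤ) (k : ℕ) (hk : 0 < k) (hB : (k : ℤ) ≤ B) :
    ∑ p ∈ ((Icc 1 B) ×ˢ (Icc 1 B)).filter (fun p : ℤ × ℤ => p.1 * p.2 = k), p.1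
      = ∑ d ∈ k.divisors, (d : ℤ) := by
  rw [← Nat.sum_divisorsAntidiagonal (n := k) (fun d _ => (d : ℤ))]
  symm
  refine Finset.sum_nbij' (fun p => ((p.1 : ℤ), (p.2 : ℤ))) (fun p => (p.1.toNat, p.2.toNat)) ?_ ?_ ?_ ?_ ?_
  · rintro ⟨a, b⟩ h
    simp only [Nat.mem_divisorsAntidiagonal, mem_filter, mem_product, mem_Icc] at h ⊢
    obtain ⟨h, h0⟩ := h
    have ha : 0 < a := Nat.pos_of_ne_zero (by rintro rfl; simp at h; omega)
    have hb : 0 < b := Nat.pos_of_ne_zero (by rintro rfl; simp at h; omega)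
    have h1 : a ≤ k := by rw [← h]; exact Nat.le_mul_of_pos_right _ hb
    have h2 : b ≤ k := by rw [← h]; exact Nat.le_mul_of_pos_left _ ha
    refine ⟨⟨⟨?_, ?_⟩, ?_, ?_⟩, ?_⟩
    all_goals first | omega | exact_mod_cast h
  · rintro ⟨a, b⟩ h
    simp only [Nat.mem_divisorsAntidiagonal, mem_filter, mem_product, mem_Icc] at h ⊢
    obtain ⟨⟨⟨h1, _⟩, h2, _⟩, h⟩ := h
    lift a to ℕ using by omega
    lift b to ℕ using by omega
    simp only [Int.toNat_natCast]
    exact ⟨by exact_mod_cast h, hk.ne'⟩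
  · rintro ⟨a, b⟩ _; simp
  · rintro ⟨a, b⟩ h
    simp only [mem_filter, mem_product, mem_Icc] at h
    ext <;> simp <;> omega
  · simp

def sg (k : ℕ) : ℤ := ∑ d ∈ k.divisors, (d : ℤ)

lemma odd_sq (x : ℤ) (hx : Odd x) : x ^ 2 % 8 = 1 := Int.sq_mod_four_eq_one_of_odd hx |> fun _ => by
  obtain ⟨k, rfl⟩ := hx
  obtain ⟨j, hj⟩ := Int.even_mul_succ_self k
  have : (2 * k + 1) ^ 2 = 8 * j + 1 := by linear_combination 4 * hj
  omega

lemma sigma_rec (N : ℤ) (hN : N % 8 = 5) :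
    ∑ x ∈ (Icc (-N) N).filter (fun x => Odd x ∧ x ^ 2 < N),
      (N - 5 * x ^ 2) * sg ((N - x ^ 2) / 4).toNat = 0 := by
  rw [← sum_S N hN]
  symm
  rw [← Finset.sum_fiberwise_of_maps_to (g := fun p => p.1)
    (t := (Icc (-N) N).filter (fun x => Odd x ∧ x ^ 2 < N))]
  · refine Finset.sum_congr rfl ?_
    intro x hx
    simp only [mem_filter, mem_Icc] at hx
    obtain ⟨⟨hx1, hx2⟩, hodd, hlt⟩ := hx
    have hsq := odd_sq x hodd
    have hk : 0 < ((N - x ^ 2) / 4).toNat := by omega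
    have hkc : (((N - x ^ 2) / 4).toNat : ℤ) * 4 = N - x ^ 2 := by omega
    have hle : (((N - x ^ 2) / 4).toNat : ℤ) ≤ N := by nlinarith [sq_nonneg x]
    generalize ((N - x ^ 2) / 4).toNat = k at *
    rw [sg, ← sum_box N k hk hle, Finset.mul_sum]
    refine Finset.sum_nbij' (fun p => p.2) (fun p => (x, p)) ?_ ?_ ?_ ?_ ?_
    · rintro ⟨y, a, b⟩ h
      simp only [S, mem_filter, mem_product, mem_Icc] at h ⊢
      obtain ⟨⟨⟨_, h2, h3⟩, h4⟩, rfl⟩ := h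
      exact ⟨⟨h2, h3⟩, by linarith⟩
    · rintro ⟨a, b⟩ h
      simp only [S, mem_filter, mem_product, mem_Icc] at h ⊢
      obtain ⟨⟨h2, h3⟩, h4⟩ := h
      exact ⟨⟨⟨⟨hx1, hx2⟩, h2, h3⟩, by linarith⟩, trivial⟩
    · rintro ⟨y, a, b⟩ h
      simp only [mem_filter] at h
      simp [h.2]
    · simp
    · rintro ⟨y, a, b⟩ h
      simp only [mem_filter] at h
      simp [h.2]
  · rintro ⟨x, a, b⟩ h
    have h' := h
    rw [mem_S] at h'
    simp only [S, mem_filter, mem_product, mem_Icc] at h h' ⊢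
    have : 0 < a * b := mul_pos h'.1 h'.2.1
    refine ⟨h.1.1, ?_, by linarith⟩
    rw [← Int.not_even_iff_odd]
    rintro ⟨y, rfl⟩
    have := h.2
    ring_nf at this
    omega

/-- odd vectors -/
noncomputable def P (k : ℕ) (N : ℤ) : Finset (Fin k → ℤ) :=
  (Fintype.piFinset (fun _ : Fin k => Icc (-N) N)).filter (fun v => (∀ i, Odd (v i)) ∧ ∑ i, v i ^ 2 = N)

lemma box {k : ℕ} {N : ℤ} (v : Fin k → ℤ) (h : ∑ i, v i ^ 2 = N) (i : Fin k) : -N ≤ v i ∧ v i ≤ N := by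
  have : v i ^ 2 ≤ N := by
    rw [← h]
    exact Finset.single_le_sum (f := fun i => v i ^ 2) (fun j _ => sq_nonneg _) (mem_univ i)
  constructor
  · rcases le_or_gt 0 (v i) with h | h <;> nlinarith [sq_nonneg (v i)]
  · rcases le_or_gt (v i) 0 with h | h <;> nlinarith [sq_nonneg (v i)]

lemma mem_P (k : ℕ) (N : ℤ) (v : Fin k → ℤ) :
    v ∈ P k N ↔ (∀ i, Odd (v i)) ∧ ∑ i, v i ^ 2 = N := by
  simp only [P, mem_filter, Fintype.mem_piFinset, mem_Icc, and_iff_right_iff_imp]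
  rintro ⟨-, h⟩ i
  exact box v h i

lemma P_rec (N : ℤ) :
    ∑ x ∈ (Icc (-N) N).filter (fun x => Odd x ∧ x ^ 2 < N),
      (N - 5 * x ^ 2) * ((P 4 (N - x ^ 2)).card : ℤ) = 0 := by
  have h1 : ∀ i : Fin 5, ∑ v ∈ P 5 N, v i ^ 2 = ∑ v ∈ P 5 N, v 0 ^ 2 := by
    intro i
    have key : ∀ v ∈ P 5 N, v ∘ (Equiv.swap 0 i) ∈ P 5 N := by
      intro v hv
      rw [mem_P] at hv ⊢
      refine ⟨fun j => hv.1 _, ?_⟩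
      rw [← hv.2]
      exact Equiv.sum_comp (Equiv.swap 0 i) (fun j => v j ^ 2)
    refine Finset.sum_nbij' (fun v => v ∘ (Equiv.swap 0 i)) (fun v => v ∘ (Equiv.swap 0 i)) key key ?_ ?_ ?_
    · intro v _; ext j; simp
    · intro v _; ext j; simp
    · intro v _; simp
  have h2 : ∑ v ∈ P 5 N, (N - 5 * v 0 ^ 2) = 0 := by
    have h3 : ∑ v ∈ P 5 N, N = ∑ v ∈ P 5 N, ∑ i, v i ^ 2 :=
      Finset.sum_congr rfl fun v hv => ((mem_P _ _ _).1 hv).2.symm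
    rw [Finset.sum_comm, Finset.sum_congr rfl (fun i _ => h1 i)] at h3
    rw [Finset.sum_sub_distrib, h3, ← Finset.mul_sum]
    simp
  rw [← h2]
  symm
  rw [← Finset.sum_fiberwise_of_maps_to (g := fun v => v 0)
    (t := (Icc (-N) N).filter (fun x => Odd x ∧ x ^ 2 < N))]
  · refine Finset.sum_congr rfl ?_
    intro x hx
    simp only [mem_filter, mem_Icc] at hx
    obtain ⟨⟨hx1, hx2⟩, hodd, hlt⟩ := hx
    rw [mul_comm, ← nsmul_eq_mul, ← Finset.sum_const]
    refine Finset.sum_nbij' (fun v => Fin.tail v) (fun w => Fin.cons x w) ?_ ?_ ?_ ?_ ?_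
    · intro v hv
      simp only [mem_filter, mem_P] at hv ⊢
      obtain ⟨⟨h1, h2⟩, rfl⟩ := hv
      refine ⟨fun i => h1 _, ?_⟩
      rw [Fin.sum_univ_succ] at h2
      simp only [Fin.tail]
      linarith
    · intro w hw
      simp only [mem_filter, mem_P] at hw ⊢
      refine ⟨⟨?_, ?_⟩, by simp⟩
      · intro i
        refine Fin.cases ?_ ?_ i
        · simpa using hodd
        · intro j; simpa using hw.1 j
      · rw [Fin.sum_univ_succ]; simp [hw.2]
    · intro v hv
      simp only [mem_filter] at hv
      obtain ⟨_, rfl⟩ := hv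
      simp
    · intro w _; simp
    · intro v hv
      simp only [mem_filter] at hv
      simp [hv.2]
  · intro v hv
    rw [mem_P] at hv
    simp only [mem_filter, mem_Icc]
    refine ⟨box v hv.2 0, hv.1 0, ?_⟩
    have h5 := hv.2
    rw [Fin.sum_univ_succ] at h5
    have : 0 < ∑ i : Fin 4, v i.succ ^ 2 := by
      refine Finset.sum_pos (fun i _ => ?_) ⟨0, mem_univ _⟩
      have := hv.1 i.succ
      have : v i.succ ≠ 0 := by intro h; rw [h] at this; simp at this
      positivity
    linarith

lemma P4_one : (P 4 4).card = 16 := by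
  have : P 4 4 = Fintype.piFinset (fun _ : Fin 4 => ({1, -1} : Finset ℤ)) := by
    ext v
    simp only [mem_P, Fintype.mem_piFinset, mem_insert, mem_singleton]
    constructor
    · rintro ⟨ho, hs⟩
      have hp : ∀ i, 1 ≤ v i ^ 2 := fun i => by
        have := ho i
        have : v i ≠ 0 := by intro h; rw [h] at this; simp at this
        have : 0 < v i ^ 2 := by positivity
        omega
      have h0 := hp 0
      have h1 := hp 1
      have h2 := hp 2
      have h3 := hp 3
      rw [Fin.sum_univ_four] at hs
      intro i
      have h6 : v i ^ 2 = 1 := by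
        fin_cases i <;> simp only [Fin.zero_eta, Fin.mk_one, Fin.reduceFinMk] <;> omega
      exact by simpa using h6
    · intro h
      refine ⟨fun i => ?_, ?_⟩
      · rcases h i with h | h <;> rw [h] <;> decide
      · have : ∀ i, v i ^ 2 = 1 := fun i => by rcases h i with h | h <;> rw [h] <;> norm_num
        simp [this]
  rw [this, Fintype.card_piFinset]
  simp

lemma P4_eq (m : ℕ) (hm : Odd m) : ((P 4 (4 * m)).card : ℤ) = 16 * sg m := by
  induction m using Nat.strong_induction_on with
  | _ m ih =>
  by_cases h1 : m = 1
  · subst h1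
    have : sg 1 = 1 := by simp [sg]
    rw [this]
    simp [P4_one]
  have hm3 : 3 ≤ m := by rcases hm with ⟨k, rfl⟩; omega
  have hN : (4 * (m : ℤ) + 1) % 8 = 5 := by rcases hm with ⟨k, rfl⟩; push_cast; omega
  have e1 := P_rec (4 * (m : ℤ) + 1)
  have e2 := sigma_rec _ hN
  have e3 : ∑ x ∈ (Icc (-(4 * (m : ℤ) + 1)) (4 * (m : ℤ) + 1)).filter
      (fun x => Odd x ∧ x ^ 2 < 4 * (m : ℤ) + 1), (4 * (m : ℤ) + 1 - 5 * x ^ 2) *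
        (((P 4 (4 * (m : ℤ) + 1 - x ^ 2)).card : ℤ) - 16 * sg ((4 * (m : ℤ) + 1 - x ^ 2) / 4).toNat) = 0 := by
    simp only [mul_sub, Finset.sum_sub_distrib, e1]
    simp only [mul_left_comm _ (16 : ℤ), ← Finset.mul_sum, e2]
    simp
  have hsub : ({1, -1} : Finset ℤ) ⊆ (Icc (-(4 * (m : ℤ) + 1)) (4 * (m : ℤ) + 1)).filter
      (fun x => Odd x ∧ x ^ 2 < 4 * (m : ℤ) + 1) := by
    intro x hx
    simp only [mem_insert, mem_singleton] at hx
    simp only [mem_filter, mem_Icc]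
    rcases hx with rfl | rfl
    · exact ⟨⟨by omega, by omega⟩, by decide, by omega⟩
    · exact ⟨⟨by omega, by omega⟩, by decide, by omega⟩
  rw [← Finset.sum_subset hsub] at e3
  · rw [Finset.sum_pair (by norm_num)] at e3
    have : ((4 * (m : ℤ)) / 4).toNat = m := by omega
    norm_num at e3
    have hne : (4 * (m : ℤ) + 1 - 5) ≠ 0 := by omega
    rcases e3 with h | h
    · exact absurd h hne
    · linarith
  · intro x hx hx'
    simp only [mem_filter, mem_insert, mem_singleton, not_or] at hx hx'
    obtain ⟨-, hodd, hlt⟩ := hx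
    have hsq := odd_sq x hodd
    have hx9 : 1 < x ^ 2 := by
      rw [← Int.not_even_iff_odd] at hodd
      have : x ≠ 0 := by rintro rfl; simp at hodd
      rcases lt_or_gt_of_ne this with h | h
      · have : x ≤ -2 := by omega
        nlinarith
      · have : 2 ≤ x := by omega
        nlinarith
    obtain ⟨k, hk⟩ : ∃ k : ℕ, 4 * (m : ℤ) + 1 - x ^ 2 = 4 * k :=
      ⟨((4 * (m : ℤ) + 1 - x ^ 2) / 4).toNat, by omega⟩
    have := ih k (by omega) (by rw [Nat.odd_iff]; omega)
    rw [hk, this]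
    have : ((4 * (k : ℤ)) / 4).toNat = k := by omega
    rw [this]; simp


noncomputable def Q (N : ℤ) : Finset (Fin 4 → ℤ) :=
  (Fintype.piFinset (fun _ : Fin 4 => Icc (-N) N)).filter (fun v => ∑ i, v i ^ 2 = N)

lemma mem_Q (N : ℤ) (v : Fin 4 → ℤ) : v ∈ Q N ↔ ∑ i, v i ^ 2 = N := by
  simp only [Q, mem_filter, Fintype.mem_piFinset, mem_Icc, and_iff_right_iff_imp]
  intro h i
  exact box v h i

lemma mem_Q' (N : ℤ) (v : Fin 4 → ℤ) :
    v ∈ Q N ↔ v 0 ^ 2 + v 1 ^ 2 + v 2 ^ 2 + v 3 ^ 2 = N := by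
  rw [mem_Q, Fin.sum_univ_four]

lemma r4_eq (n : ℕ) : r4 n = (Q n).card := by
  rw [r4, ← Nat.card_eq_finsetCard]
  exact Nat.card_congr (Equiv.subtypeEquivRight fun v => (mem_Q n v).symm)

lemma sq_mod4 (x : ℤ) : (x % 2 = 0 ∧ x ^ 2 % 4 = 0) ∨ (x % 2 = 1 ∧ x ^ 2 % 4 = 1) := by
  rcases Int.emod_two_eq_zero_or_one x with h | h
  · left
    obtain ⟨k, rfl⟩ : ∃ k, x = 2 * k := ⟨x / 2, by omega⟩
    refine ⟨h, ?_⟩; ring_nf; omega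
  · right
    have := odd_sq x (Int.odd_iff.2 h)
    exact ⟨h, by omega⟩

/-- the half-turn correspondence -/
lemma half (N : ℤ) : ((Q (2 * N)).filter (fun v => (v 0 + v 1) % 2 = 0)).card = (Q N).card := by
  refine Finset.card_nbij' (fun v => ![(v 0 + v 1) / 2, (v 0 - v 1) / 2, (v 2 + v 3) / 2, (v 2 - v 3) / 2])
    (fun v => ![v 0 + v 1, v 0 - v 1, v 2 + v 3, v 2 - v 3]) ?_ ?_ ?_ ?_
  · intro v hv
    simp only [mem_coe, mem_filter, mem_Q'] at hv ⊢
    obtain ⟨h, he⟩ := hv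
    have he2 : (v 2 + v 3) % 2 = 0 := by
      have h0 := sq_mod4 (v 0)
      have h1 := sq_mod4 (v 1)
      have h2 := sq_mod4 (v 2)
      have h3 := sq_mod4 (v 3)
      omega
    obtain ⟨a, ha⟩ : ∃ a, v 0 = 2 * a - v 1 := ⟨(v 0 + v 1) / 2, by omega⟩
    obtain ⟨b, hb⟩ : ∃ b, v 2 = 2 * b - v 3 := ⟨(v 2 + v 3) / 2, by omega⟩
    simp only [Matrix.cons_val]
    have e1 : (v 0 + v 1) / 2 = a := by omega
    have e2 : (v 0 - v 1) / 2 = a - v 1 := by omega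
    have e3 : (v 2 + v 3) / 2 = b := by omega
    have e4 : (v 2 - v 3) / 2 = b - v 3 := by omega
    rw [e1, e2, e3, e4]
    rw [ha, hb] at h
    linarith
  · intro v hv
    simp only [mem_coe, mem_filter, mem_Q', Matrix.cons_val] at hv ⊢
    refine ⟨by rw [← hv]; ring, by omega⟩
  · intro v hv
    simp only [mem_coe, mem_filter, mem_Q'] at hv
    obtain ⟨h, he⟩ := hv
    have he2 : (v 2 + v 3) % 2 = 0 := by
      have h0 := sq_mod4 (v 0)
      have h1 := sq_mod4 (v 1)
      have h2 := sq_mod4 (v 2)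
      have h3 := sq_mod4 (v 3)
      omega
    ext i
    fin_cases i <;> simp <;> omega
  · intro v hv
    ext i
    fin_cases i <;> simp <;> omega

lemma Q_four (N : ℤ) : (Q (4 * N)).card = (Q (2 * N)).card := by
  rw [← half (2 * N), show 2 * (2 * N) = 4 * N by ring]
  congr 1
  symm
  rw [Finset.filter_eq_self]
  intro v hv
  rw [mem_Q'] at hv
  have h0 := sq_mod4 (v 0)
  have h1 := sq_mod4 (v 1)
  have h2 := sq_mod4 (v 2)
  have h3 := sq_mod4 (v 3)
  omega

lemma swap_class (N : ℤ) (i : Fin 4) (hi : i ≠ 0) :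
    ((Q N).filter (fun v => (v 0 + v i) % 2 = 0)).card =
    ((Q N).filter (fun v => (v 0 + v 1) % 2 = 0)).card := by
  have h0 : (Equiv.swap 1 i) 0 = 0 := Equiv.swap_apply_of_ne_of_ne (by decide) hi.symm
  have key : ∀ v ∈ Q N, v ∘ (Equiv.swap 1 i) ∈ Q N := by
    intro v hv
    rw [mem_Q] at hv ⊢
    rw [← hv]
    exact Equiv.sum_comp (Equiv.swap 1 i) (fun j => v j ^ 2)
  refine Finset.card_nbij' (fun v => v ∘ (Equiv.swap 1 i)) (fun v => v ∘ (Equiv.swap 1 i)) ?_ ?_ ?_ ?_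
  · intro v hv
    simp only [mem_coe, mem_filter] at hv ⊢
    exact ⟨key v hv.1, by simpa [h0] using hv.2⟩
  · intro v hv
    simp only [mem_coe, mem_filter] at hv ⊢
    exact ⟨key v hv.1, by simpa [h0] using hv.2⟩
  · intro v _; ext j; simp
  · intro v _; ext j; simp

lemma Q_two (N : ℤ) (hN : N % 2 = 1) : (Q (2 * N)).card = 3 * (Q N).card := by
  have c1 := half N
  have c2 := swap_class (2 * N) 2 (by decide)
  have c3 := swap_class (2 * N) 3 (by decide)
  have hpar : ∀ v ∈ Q (2 * N), ((v 0 + v 1) % 2 = 0 ∧ (v 0 + v 2) % 2 ≠ 0 ∧ (v 0 + v 3) % 2 ≠ 0) ∨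
      ((v 0 + v 1) % 2 ≠ 0 ∧ (v 0 + v 2) % 2 = 0 ∧ (v 0 + v 3) % 2 ≠ 0) ∨
      ((v 0 + v 1) % 2 ≠ 0 ∧ (v 0 + v 2) % 2 ≠ 0 ∧ (v 0 + v 3) % 2 = 0) := by
    intro v hv
    rw [mem_Q'] at hv
    have h0 := sq_mod4 (v 0)
    have h1 := sq_mod4 (v 1)
    have h2 := sq_mod4 (v 2)
    have h3 := sq_mod4 (v 3)
    omega
  have hsum : (Q (2 * N)).card = ((Q (2 * N)).filter (fun v => (v 0 + v 1) % 2 = 0)).card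
      + ((Q (2 * N)).filter (fun v => (v 0 + v 2) % 2 = 0)).card
      + ((Q (2 * N)).filter (fun v => (v 0 + v 3) % 2 = 0)).card := by
    rw [Finset.card_filter, Finset.card_filter, Finset.card_filter, ← Finset.sum_add_distrib,
      ← Finset.sum_add_distrib, Finset.card_eq_sum_ones]
    refine Finset.sum_congr rfl fun v hv => ?_
    rcases hpar v hv with ⟨a, b, c⟩ | ⟨a, b, c⟩ | ⟨a, b, c⟩ <;> simp only [a, b, c, if_true, if_false]
  omega

lemma Q_four' (N : ℤ) : (Q (4 * N)).card = (Q N).card + (P 4 (4 * N)).card := by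
  rw [← Finset.card_filter_add_card_filter_not (fun v : Fin 4 → ℤ => v 0 % 2 = 0)]
  congr 1
  · refine Finset.card_nbij' (fun v i => v i / 2) (fun v i => 2 * v i) ?_ ?_ ?_ ?_
    · intro v hv
      simp only [mem_coe, mem_filter, mem_Q'] at hv ⊢
      obtain ⟨hv, he⟩ := hv
      have h0 := sq_mod4 (v 0)
      have h1 := sq_mod4 (v 1)
      have h2 := sq_mod4 (v 2)
      have h3 := sq_mod4 (v 3)
      have e0 : v 0 = 2 * (v 0 / 2) := by omega
      have e1 : v 1 = 2 * (v 1 / 2) := by omega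
      have e2 : v 2 = 2 * (v 2 / 2) := by omega
      have e3 : v 3 = 2 * (v 3 / 2) := by omega
      rw [e0, e1, e2, e3] at hv
      linarith
    · intro v hv
      simp only [mem_coe, mem_filter, mem_Q'] at hv ⊢
      exact ⟨by rw [← hv]; ring, by omega⟩
    · intro v hv
      simp only [mem_coe, mem_filter, mem_Q'] at hv ⊢
      obtain ⟨hv, he⟩ := hv
      have h0 := sq_mod4 (v 0)
      have h1 := sq_mod4 (v 1)
      have h2 := sq_mod4 (v 2)
      have h3 := sq_mod4 (v 3)
      ext i
      fin_cases i <;> simp <;> omega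
    · intro v hv
      ext i; simp
  · congr 1
    ext v
    simp only [mem_filter, mem_P, mem_Q]
    constructor
    · rintro ⟨h, ho⟩
      refine ⟨?_, h⟩
      rw [Fin.sum_univ_four] at h
      have h0 := sq_mod4 (v 0)
      have h1 := sq_mod4 (v 1)
      have h2 := sq_mod4 (v 2)
      have h3 := sq_mod4 (v 3)
      intro i
      rw [Int.odd_iff]
      fin_cases i <;> simp <;> omega
    · rintro ⟨ho, h⟩
      have := Int.odd_iff.1 (ho 0)
      exact ⟨h, by omega⟩

lemma Q_odd (m : ℕ) (hm : Odd m) : ((Q m).card : ℤ) = 8 * sg m := by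
  have h1 := Q_four' m
  have h2 := Q_four m
  have h3 := Q_two m (by rw [Nat.odd_iff] at hm; omega)
  have h4 := P4_eq m hm
  omega

lemma Q_even (k m : ℕ) (hm : Odd m) : ((Q (2 ^ (k + 1) * m)).card : ℤ) = 24 * sg m := by
  induction k with
  | zero =>
    have h3 := Q_two m (by rw [Nat.odd_iff] at hm; omega)
    have := Q_odd m hm
    simp only [zero_add, pow_one]
    omega
  | succ k ih =>
    have := Q_four (2 ^ k * m)
    rw [← ih, show (2 : ℤ) ^ (k + 1 + 1) * m = 4 * (2 ^ k * m) by ring, this]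
    congr 3; ring

lemma sg_two (m : ℕ) (hm : Odd m) : sg (2 * m) = 3 * sg m := by
  have hc : Nat.Coprime 2 m := Nat.coprime_two_left.2 hm
  have := (ArithmeticFunction.isMultiplicative_sigma (k := 1)).map_mul_of_coprime hc
  simp only [ArithmeticFunction.sigma_one_apply] at this
  rw [Nat.prime_two.sum_divisors] at this
  simp only [sg]
  zify at this
  rw [this]; norm_num

lemma filter_even (k m : ℕ) (hm : Odd m) :
    (2 ^ (k + 1) * m).divisors.filter (fun d => ¬ (4 ∣ d)) = (2 * m).divisors := by
  have hm0 : m ≠ 0 := by rintro rfl; simp at hm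
  ext d
  simp only [mem_filter, Nat.mem_divisors]
  constructor
  · rintro ⟨⟨hd, -⟩, h4⟩
    refine ⟨?_, by omega⟩
    rcases Nat.even_or_odd' d with ⟨e, rfl | rfl⟩
    · apply Nat.mul_dvd_mul_left
      have he : Odd e := by rw [Nat.odd_iff]; omega
      exact (Nat.Coprime.pow_right (k + 1) (Nat.coprime_two_right.2 he)).dvd_of_dvd_mul_left
        ((Nat.dvd_mul_left e 2).trans hd)
    · apply Dvd.dvd.mul_left
      exact (Nat.Coprime.pow_right (k + 1) (Nat.coprime_two_right.2 ⟨e, rfl⟩)).dvd_of_dvd_mul_left hd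
  · rintro ⟨hd, -⟩
    refine ⟨⟨hd.trans ⟨2 ^ k, by ring⟩, by positivity⟩, fun h => ?_⟩
    have := h.trans hd
    rw [Nat.odd_iff] at hm
    omega

lemma jacobi (n : ℕ) (hn : 1 ≤ n) :
    (r4 n : ℤ) = 8 * ∑ d ∈ n.divisors.filter (fun d => ¬(4 ∣ d)), (d : ℤ) := by
  obtain ⟨k, m, hm, rfl⟩ := Nat.exists_eq_two_pow_mul_odd (n := n) (by omega)
  rw [r4_eq]
  cases k with
  | zero =>
    simp only [pow_zero, one_mul]
    rw [Q_odd m hm, Finset.filter_true_of_mem, sg]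
    intro d hd h4
    have := h4.trans (Nat.dvd_of_mem_divisors hd)
    rw [Nat.odd_iff] at hm
    omega
  | succ k =>
    rw [filter_even k m hm]
    have h1 := Q_even k m hm
    have h2 := sg_two m hm
    push_cast
    rw [h1, ← sg, h2]
    ring

end J4

/-- Jacobi's four-square theorem
`ϑ(q)⁴ = 1 + 8 Σ_{n≥1} (Σ_{d|n, 4∤d} d) q^n`, and consequently
`ϑ(q)⁴ + 4α(q) + 24G₂(q⁴)` has constant term `0` and `q¹`-coefficient `12`. -/
theorem theta_fourth_and_combination :
    (∀ n : ℕ, 1 ≤ n →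
      (r4 n : ℤ) = 8 * ∑ d ∈ n.divisors.filter (fun d => ¬(4 ∣ d)), (d : ℤ)) ∧
    comboCoeff 0 = 0 ∧ comboCoeff 1 = 12 := by
  refine ⟨J4.jacobi, ?_, ?_⟩
  · have h : r4 0 = 1 := by
      rw [J4.r4_eq, Finset.card_eq_one]
      refine ⟨0, ?_⟩
      ext v
      rw [J4.mem_Q, Finset.mem_singleton]
      push_cast
      rw [Finset.sum_eq_zero_iff_of_nonneg (fun i _ => sq_nonneg _)]
      simp [funext_iff]
    simp [comboCoeff, h]
    norm_num
  · have h : r4 1 = 8 := by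
      have := J4.jacobi 1 le_rfl
      rw [Nat.divisors_one] at this
      have e : ({1} : Finset ℕ).filter (fun d => ¬ (4 ∣ d)) = {1} := by decide
      rw [e] at this
      simp at this
      exact_mod_cast this
    simp [comboCoeff, h]
    norm_num
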